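/- arXiv:2006.11568 — 2 statements merged into one kernel-verified Lean document; each statement's English description precedes it below -/
import Mathlib

section
/- Fix integers m ≥ 3 and j, k with 2 ≤ j ≤ k ≤ m−1. Let f, g : [0,1] → ℝ be continuous with f(z) ≥ g(z) for all z ∈ [0,1]. Suppose u, v : T_m → ℝ are bounded, u satisfies u(x) = min_{Y ⊆ S(x), |Y| = k} max_{y ∈ Y} u(y) for every vertex x together with lim_{l→∞} u(π|_l) = f(ψ(π)) for every branch π, and v satisfies v(x) = min_{Y ⊆ S(x), |Y| = j} max_{y ∈ Y} v(y) for every vertex x together with lim_{l→∞} v(π|_l) = g(ψ(π)) for every branch π. Then u(x) ≥ v(x) for every vertex x ∈ T_m. -/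
open Filter Topology

/-- The maximum of `u` over the successors `x ++ [i]`, `i ∈ Y`. -/
noncomputable def kMaxOn (m : ℕ) (u : List (Fin m) → ℝ) (x : List (Fin m))
    (Y : Finset (Fin m)) : ℝ :=
  sSup ((fun i : Fin m => u (x ++ [i])) '' (Y : Set (Fin m)))

/-- `min_{Y ⊆ S(x), |Y| = k} max_{y ∈ Y} u(y)`, the k-th smallest value of `u` on `S(x)`. -/
noncomputable def kMinMax (m k : ℕ) (u : List (Fin m) → ℝ) (x : List (Fin m)) : ℝ :=
  sInf (kMaxOn m u x '' {Y : Finset (Fin m) | Y.card = k})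

/-- `u` is `k`-quasiconvex on the regular `m`-branching tree. -/
def KQuasiconvex (m k : ℕ) (u : List (Fin m) → ℝ) : Prop :=
  ∀ x : List (Fin m), u x ≤ kMinMax m k u x

/-- Truncation of a branch `π` to level `l`. -/
def branchTrunc (m : ℕ) (π : ℕ → Fin m) (l : ℕ) : List (Fin m) :=
  List.ofFn fun i : Fin l => π i

/-- `ψ(π) = Σ_{j ≥ 1} a_j m^{-j}`. -/
noncomputable def psiBranch (m : ℕ) (π : ℕ → Fin m) : ℝ :=
  ∑' j : ℕ, ((π j : ℕ) : ℝ) / (m : ℝ) ^ (j + 1)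

/-- `ψ(x) = Σ_{j=1}^{|x|} a_j m^{-j}` for a vertex `x`. -/
noncomputable def psiVertex (m : ℕ) (x : List (Fin m)) : ℝ :=
  ∑ i : Fin x.length, ((x.get i : ℕ) : ℝ) / (m : ℝ) ^ ((i : ℕ) + 1)

/-- The class `QC_k(f)`: `k`-quasiconvex functions lying below `f` on the boundary. -/
def QCSet (m k : ℕ) (f : ℝ → ℝ) : Set (List (Fin m) → ℝ) :=
  {u | KQuasiconvex m k u ∧
    ∀ π : ℕ → Fin m, limsup (fun l => u (branchTrunc m π l)) atTop ≤ f (psiBranch m π)}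

/-- The `k`-quasiconvex envelope `u*_f` of a boundary datum `f`. -/
noncomputable def qcEnvelope (m k : ℕ) (f : ℝ → ℝ) (x : List (Fin m)) : ℝ :=
  sSup ((fun u : List (Fin m) → ℝ => u x) '' QCSet m k f)

/-- The class `𝔔C_k(g)`: `k`-quasiconvex functions lying below `g` inside the tree. -/
def OBSet (m k : ℕ) (g : List (Fin m) → ℝ) : Set (List (Fin m) → ℝ) :=
  {u | KQuasiconvex m k u ∧ ∀ x, u x ≤ g x}

/-- The `k`-quasiconvex envelope `u⋆_g` of an obstacle `g` inside the tree. -/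
noncomputable def obEnvelope (m k : ℕ) (g : List (Fin m) → ℝ) (x : List (Fin m)) : ℝ :=
  sSup ((fun u : List (Fin m) → ℝ => u x) '' OBSet m k g)

/-!
Let `x` be a vertex. At least `k` successors `y` of `x` satisfy `u y ≤ u x`, whereas fewer than
`j ≤ k` of them satisfy `v y < v x`; hence some successor has both `u y ≤ u x` and `v x ≤ v y`.
Repeating this choice produces a branch through `x` along which `u` stays below `u x` and `v` stays
above `v x`. Comparing the boundary values at its end gives `v x ≤ g ≤ f ≤ u x`.
-/

variable {m j k : ℕ}

section MinMax

variable (u v : List (Fin m) → ℝ) (x : List (Fin m))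

theorem le_kMaxOn {Y : Finset (Fin m)} {i : Fin m} (hi : i ∈ Y) :
    u (x ++ [i]) ≤ kMaxOn m u x Y :=
  le_csSup (Y.finite_toSet.image _).bddAbove ⟨i, hi, rfl⟩

theorem exists_mem_eq_kMaxOn {Y : Finset (Fin m)} (hY : Y.Nonempty) :
    ∃ i ∈ Y, u (x ++ [i]) = kMaxOn m u x Y :=
  (hY.to_set.image fun i ↦ u (x ++ [i])).csSup_mem (Y.finite_toSet.image _)

theorem kMinMax_card_le_kMaxOn (Y : Finset (Fin m)) :
    kMinMax m Y.card u x ≤ kMaxOn m u x Y :=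
  csInf_le ((Set.toFinite _).image _).bddBelow ⟨Y, rfl, rfl⟩

theorem exists_card_eq_kMaxOn_eq_kMinMax (hk : k ≤ m) :
    ∃ Y : Finset (Fin m), Y.card = k ∧ kMaxOn m u x Y = kMinMax m k u x := by
  obtain ⟨Y, -, hY⟩ := Finset.exists_subset_card_eq (hk.trans_eq (Finset.card_fin m).symm)
  have hne : (kMaxOn m u x '' {Y | Y.card = k}).Nonempty := ⟨_, Y, hY, rfl⟩
  exact hne.csInf_mem ((Set.toFinite _).image _)

theorem le_card_filter_le_kMinMax (hk : k ≤ m) :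
    k ≤ (Finset.univ.filter fun i ↦ u (x ++ [i]) ≤ kMinMax m k u x).card := by
  obtain ⟨Y, rfl, hY⟩ := exists_card_eq_kMaxOn_eq_kMinMax u x hk
  exact Finset.card_le_card fun i hi ↦
    Finset.mem_filter.2 ⟨Finset.mem_univ i, hY ▸ le_kMaxOn u x hi⟩

theorem card_filter_lt_kMinMax_lt (hk : 0 < k) :
    (Finset.univ.filter fun i ↦ u (x ++ [i]) < kMinMax m k u x).card < k := by
  by_contra! hcard
  obtain ⟨Y, hYsub, rfl⟩ := Finset.exists_subset_card_eq hcard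
  obtain ⟨i, hiY, hi⟩ := exists_mem_eq_kMaxOn u x (Finset.card_pos.1 hk)
  have hlt : u (x ++ [i]) < kMinMax m Y.card u x := (Finset.mem_filter.1 (hYsub hiY)).2
  exact hlt.not_ge (hi ▸ kMinMax_card_le_kMaxOn u x Y)

theorem exists_le_kMinMax_and_kMinMax_le (hj : 0 < j) (hjk : j ≤ k) (hkm : k ≤ m) :
    ∃ i, u (x ++ [i]) ≤ kMinMax m k u x ∧ kMinMax m j v x ≤ v (x ++ [i]) := by
  obtain ⟨i, hiu, hiv⟩ := Finset.exists_mem_notMem_of_card_lt_card <|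
    (card_filter_lt_kMinMax_lt v x hj).trans_le (hjk.trans (le_card_filter_le_kMinMax u x hkm))
  exact ⟨i, by simpa using hiu, by simpa using hiv⟩

end MinMax

section ExtendByRule

variable {α : Type*} (c : List α → α) (x : List α)

/-- The infinite sequence that starts with the entries of `x` and whose every further entry is
chosen by the rule `c` from the list of all preceding entries. -/
def extendByRule (n : ℕ) : α :=
  if h : n < x.length then x[n] else c (List.ofFn fun i : Fin n ↦ extendByRule i)

theorem ofFn_extendByRule_length :
    (List.ofFn fun i : Fin x.length ↦ extendByRule c x i) = x := by
  refine List.ext_getElem List.length_ofFn fun n _ hn ↦ ?_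
  rw [List.getElem_ofFn, extendByRule, dif_pos hn]

theorem ofFn_extendByRule_succ {n : ℕ} (hn : x.length ≤ n) :
    (List.ofFn fun i : Fin (n + 1) ↦ extendByRule c x i) =
      (List.ofFn fun i : Fin n ↦ extendByRule c x i) ++
        [c (List.ofFn fun i : Fin n ↦ extendByRule c x i)] := by
  have hlast : extendByRule c x n = c (List.ofFn fun i : Fin n ↦ extendByRule c x i) := by
    rw [extendByRule, dif_neg hn.not_gt]
  simp only [List.ofFn_succ_last, Fin.val_castSucc, Fin.val_last, hlast]

theorem exists_seq_forall_ofFn {P : List α → Prop} {x : List α}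
    (hP : ∀ y, P y → ∃ a, P (y ++ [a])) (hx : P x) :
    ∃ π : ℕ → α, ∀ n ≥ x.length, P (List.ofFn fun i : Fin n ↦ π i) := by
  have : Nonempty α := (hP x hx).nonempty
  choose! c hc using hP
  refine ⟨extendByRule c x, fun n hn ↦ ?_⟩
  induction n, hn using Nat.le_induction with
  | base => rwa [ofFn_extendByRule_length]
  | succ n hn ih => exact ofFn_extendByRule_succ c x hn ▸ hc _ ih

end ExtendByRule

theorem exists_branch_eventually_le_and_le {u v : List (Fin m) → ℝ}
    (hj : 0 < j) (hjk : j ≤ k) (hkm : k ≤ m)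
    (hu : ∀ x, kMinMax m k u x ≤ u x) (hv : KQuasiconvex m j v) (x : List (Fin m)) :
    ∃ π : ℕ → Fin m, ∀ᶠ l in atTop,
      u (branchTrunc m π l) ≤ u x ∧ v x ≤ v (branchTrunc m π l) := by
  have hstep : ∀ y, u y ≤ u x ∧ v x ≤ v y →
      ∃ i, u (y ++ [i]) ≤ u x ∧ v x ≤ v (y ++ [i]) := fun y ⟨huy, hvy⟩ ↦ by
    obtain ⟨i, hiu, hiv⟩ := exists_le_kMinMax_and_kMinMax_le u v y hj hjk hkm
    exact ⟨i, (hiu.trans (hu y)).trans huy, hvy.trans ((hv y).trans hiv)⟩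
  obtain ⟨π, hπ⟩ := exists_seq_forall_ofFn hstep ⟨le_refl (u x), le_refl (v x)⟩
  exact ⟨π, eventually_atTop.2 ⟨x.length, hπ⟩⟩

theorem psiBranch_eq_ofDigits (π : ℕ → Fin m) : psiBranch m π = Real.ofDigits π := by
  simp only [psiBranch, Real.ofDigits, Real.ofDigitsTerm, div_eq_mul_inv]

theorem psiBranch_mem_Icc (π : ℕ → Fin m) : psiBranch m π ∈ Set.Icc (0 : ℝ) 1 :=
  psiBranch_eq_ofDigits π ▸ ⟨Real.ofDigits_nonneg π, Real.ofDigits_le_one π⟩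

/-- The boundary conditions mean `f ≤ liminf u` and `limsup v ≤ g` along every branch; they are
stated through eventual bounds because `liminf` and `limsup` in `ℝ` take junk values on unbounded
sequences. -/
theorem comparison_solutions_general (hj : 0 < j) (hjk : j ≤ k) (hkm : k ≤ m)
    {f g : (ℕ → Fin m) → ℝ} (hfg : ∀ π, g π ≤ f π) {u v : List (Fin m) → ℝ}
    (hu : ∀ x, kMinMax m k u x ≤ u x)
    (hubdry : ∀ π, ∀ c < f π, ∀ᶠ l in atTop, c < u (branchTrunc m π l))
    (hv : KQuasiconvex m j v)
    (hvbdry : ∀ π, ∀ c > g π, ∀ᶠ l in atTop, v (branchTrunc m π l) < c)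
    (x : List (Fin m)) : v x ≤ u x := by
  obtain ⟨π, hπ⟩ := exists_branch_eventually_le_and_le hj hjk hkm hu hv x
  have hvg : v x ≤ g π := le_of_forall_gt fun c hc ↦
    have ⟨_, hlt, _, hle⟩ := ((hvbdry π c hc).and hπ).exists
    hle.trans_lt hlt
  have hfu : f π ≤ u x := le_of_forall_lt fun c hc ↦
    have ⟨_, hlt, hle, _⟩ := ((hubdry π c hc).and hπ).exists
    hlt.trans_le hle
  exact hvg.trans ((hfg π).trans hfu)

/-- solutions of the `k`- and `j`-equations with ordered continuous boundary
data `f ≥ g` are ordered. -/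
theorem comparison_solutions (m j k : ℕ) (hm : 3 ≤ m) (hj : 2 ≤ j) (hjk : j ≤ k)
    (hkm : k ≤ m - 1) (f g : ℝ → ℝ)
    (hf : ContinuousOn f (Set.Icc (0:ℝ) 1)) (hg : ContinuousOn g (Set.Icc (0:ℝ) 1))
    (hfg : ∀ z ∈ Set.Icc (0:ℝ) 1, g z ≤ f z)
    (u v : List (Fin m) → ℝ)
    (hub : ∃ C : ℝ, ∀ x, |u x| ≤ C) (hvb : ∃ C : ℝ, ∀ x, |v x| ≤ C)
    (hu : ∀ x : List (Fin m), u x = kMinMax m k u x)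
    (hubdry : ∀ π : ℕ → Fin m,
      Tendsto (fun l => u (branchTrunc m π l)) atTop (nhds (f (psiBranch m π))))
    (hv : ∀ x : List (Fin m), v x = kMinMax m j v x)
    (hvbdry : ∀ π : ℕ → Fin m,
      Tendsto (fun l => v (branchTrunc m π l)) atTop (nhds (g (psiBranch m π)))) :
    ∀ x : List (Fin m), v x ≤ u x :=
  comparison_solutions_general (by omega) hjk (by omega)
    (fun π ↦ hfg _ (psiBranch_mem_Icc π))
    (fun x ↦ (hu x).ge) (fun π _ hc ↦ (hubdry π).eventually_const_lt hc)
    (fun x ↦ (hv x).le) (fun π _ hc ↦ (hvbdry π).eventually_lt_const hc)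
end

section
/- Fix integers m ≥ 3 and k with 2 ≤ k ≤ m−1, and let g : T_m → ℝ be bounded below. Then the k-quasiconvex envelope u⋆_g of g is real-valued, k-quasiconvex, and satisfies u⋆_g(x) ≤ g(x) for every x ∈ T_m; moreover, every function u : T_m → ℝ satisfying u(x) ≤ min_{Y ⊆ S(x), |Y| = k} max_{y ∈ Y} u(y) at every vertex and u ≤ g pointwise satisfies u ≤ u⋆_g. Thus u⋆_g is the largest solution of the obstacle problem with obstacle g. -/
open Filter Topology

/-!
A value `c` is at most the `k`-th smallest value of `u` on `S(x)` exactly when every `k`-subset of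
successors contains some `y` with `c ≤ u y`. This condition survives enlarging `u`, so pointwise
suprema of `k`-quasiconvex functions are `k`-quasiconvex; `g` itself bounds all competitors, and a
constant below `g` is a competitor.
-/

section KthSmallest

variable {m k : ℕ} {u : List (Fin m) → ℝ} {x : List (Fin m)} {c : ℝ}

theorem le_kMaxOn_iff {Y : Finset (Fin m)} (hY : Y.Nonempty) :
    c ≤ kMaxOn m u x Y ↔ ∃ i ∈ Y, c ≤ u (x ++ [i]) := by
  rw [kMaxOn, ← Finset.sup'_eq_csSup_image Y hY, Finset.le_sup'_iff]

theorem le_kMinMax_iff (hk : 1 ≤ k) (hkm : k ≤ m) :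
    c ≤ kMinMax m k u x ↔ ∀ Y : Finset (Fin m), Y.card = k → ∃ i ∈ Y, c ≤ u (x ++ [i]) := by
  have exists_card_eq : {Y : Finset (Fin m) | Y.card = k}.Nonempty := by
    obtain ⟨Y, -, hY⟩ := Finset.exists_subset_card_eq (hkm.trans_eq (Finset.card_fin m).symm)
    exact ⟨Y, hY⟩
  rw [kMinMax, le_csInf_iff (Set.toFinite _).bddBelow (exists_card_eq.image _),
    Set.forall_mem_image]
  exact forall₂_congr fun Y hY ↦ le_kMaxOn_iff (Finset.card_pos.mp (hk.trans_eq hY.symm))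

end KthSmallest

section Quasiconvex

variable {m k : ℕ}

theorem kQuasiconvex_const (hk : 1 ≤ k) (hkm : k ≤ m) (c : ℝ) :
    KQuasiconvex m k fun _ ↦ c := fun _ ↦ by
  refine (le_kMinMax_iff hk hkm).mpr fun Y hY ↦ ?_
  obtain ⟨i, hi⟩ : Y.Nonempty := Finset.card_pos.mp (hk.trans_eq hY.symm)
  exact ⟨i, hi, le_rfl⟩

theorem kQuasiconvex_sSup_image (hk : 1 ≤ k) (hkm : k ≤ m) {𝒰 : Set (List (Fin m) → ℝ)}
    (hne : 𝒰.Nonempty) (hbdd : ∀ x, BddAbove ((fun u ↦ u x) '' 𝒰))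
    (hqc : ∀ u ∈ 𝒰, KQuasiconvex m k u) :
    KQuasiconvex m k fun x ↦ sSup ((fun u ↦ u x) '' 𝒰) := fun x ↦ by
  refine csSup_le (hne.image _) (Set.forall_mem_image.mpr fun u hu ↦ ?_)
  refine (le_kMinMax_iff hk hkm).mpr fun Y hY ↦ ?_
  obtain ⟨i, hi, hui⟩ := (le_kMinMax_iff hk hkm).mp (hqc u hu x) Y hY
  exact ⟨i, hi, hui.trans (le_csSup (hbdd _) (Set.mem_image_of_mem _ hu))⟩

end Quasiconvex

theorem bddAbove_eval_OBSet (m k : ℕ) (g : List (Fin m) → ℝ) (x : List (Fin m)) :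
    BddAbove ((fun u ↦ u x) '' OBSet m k g) :=
  ⟨g x, Set.forall_mem_image.mpr fun _ hu ↦ hu.2 x⟩

theorem obstacle_envelope_largest_general {m k : ℕ} (hk : 1 ≤ k) (hkm : k ≤ m)
    {g : List (Fin m) → ℝ} (hne : (OBSet m k g).Nonempty) :
    IsGreatest (OBSet m k g) (obEnvelope m k g) := by
  refine ⟨⟨?quasiconvex, fun x ↦ ?le_obstacle⟩, fun u hu x ↦ ?largest⟩
  case quasiconvex =>
    exact kQuasiconvex_sSup_image hk hkm hne (bddAbove_eval_OBSet m k g) fun _ hu ↦ hu.1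
  case le_obstacle =>
    exact csSup_le (hne.image _) (Set.forall_mem_image.mpr fun _ hu ↦ hu.2 x)
  case largest =>
    exact le_csSup (bddAbove_eval_OBSet m k g x) (Set.mem_image_of_mem _ hu)

/-- for `g` bounded below, the obstacle envelope is `k`-quasiconvex, lies below
`g`, and dominates every solution of the obstacle problem: it is the largest such solution. -/
theorem obstacle_envelope_largest (m k : ℕ) (hm : 3 ≤ m) (hk : 2 ≤ k) (hkm : k ≤ m - 1)
    (g : List (Fin m) → ℝ) (hg : ∃ C : ℝ, ∀ x, C ≤ g x) :
    KQuasiconvex m k (obEnvelope m k g) ∧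
    (∀ x : List (Fin m), obEnvelope m k g x ≤ g x) ∧
    (∀ u : List (Fin m) → ℝ, (∀ x : List (Fin m), u x ≤ kMinMax m k u x) →
      (∀ x : List (Fin m), u x ≤ g x) →
      ∀ x : List (Fin m), u x ≤ obEnvelope m k g x) := by
  obtain ⟨C, hC⟩ := hg
  have hk₁ : 1 ≤ k := by omega
  have hkm' : k ≤ m := by omega
  have const_mem : (fun _ ↦ C) ∈ OBSet m k g := ⟨kQuasiconvex_const hk₁ hkm' C, hC⟩
  obtain ⟨⟨hqc, hle⟩, hmax⟩ := obstacle_envelope_largest_general hk₁ hkm' ⟨_, const_mem⟩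
  exact ⟨hqc, hle, fun u hu hug ↦ hmax ⟨hu, hug⟩⟩
end
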